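/- arXiv:2510.04137 — 2 statements merged into one kernel-verified Lean document; each statement's English description precedes it below -/
import Mathlib

section
/- Let n ≥ 1 and p ≥ n + 1 be integers, σ ∈ (0,1), H a complex Hilbert space, and A : 𝕋ⁿ → B(H) a C^p map. Then there exist constants C₁, C₂ > 0 depending only on n and p, and a map A_σ : 𝕋ⁿ → B(H) whose Fourier coefficients satisfy Σ_{ℓ ∈ ℤⁿ} ‖Â_σ(ℓ)‖_op e^{σ|ℓ|} < ∞, such that: (i) sup_{φ ∈ 𝕋ⁿ} ‖A(φ) − A_σ(φ)‖_op ≤ C₁ σ^p ‖A‖_{C^p}; (ii) Σ_{ℓ ∈ ℤⁿ} ‖Â_σ(ℓ)‖_op e^{σ|ℓ|} ≤ C₂ ‖A‖_{C^p}; (iii) Â_σ(0) = Â(0), i.e. A_σ has the same average over 𝕋ⁿ as A. -/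
open MeasureTheory Real Filter

noncomputable section

/-- ℓ¹ norm of an integer vector. -/
def l1Z {n : ℕ} (ℓ : Fin n → ℤ) : ℝ := ∑ j, |(ℓ j : ℝ)|

/-- ℓ¹ norm of a real vector. -/
def l1R {n : ℕ} (x : Fin n → ℝ) : ℝ := ∑ j, |x j|

/-- `f : ℝⁿ → E` is `2π`-periodic in each variable (i.e. descends to the torus `𝕋ⁿ`). -/
def Periodic2Pi {n : ℕ} {E : Type*} (f : (Fin n → ℝ) → E) : Prop :=
  ∀ (x : Fin n → ℝ) (ℓ : Fin n → ℤ), f (fun j => x j + 2 * π * ℓ j) = f x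

/-- Fourier coefficient `F̂(ℓ) = (2π)^{-n} ∫_{𝕋ⁿ} F(φ) e^{-i ℓ·φ} dφ`. -/
def fCoeff {n : ℕ} {E : Type*} [NormedAddCommGroup E] [NormedSpace ℂ E] [CompleteSpace E]
    (f : (Fin n → ℝ) → E) (ℓ : Fin n → ℤ) : E :=
  ((2 * π) ^ n : ℝ)⁻¹ • ∫ x in Set.univ.pi (fun _ : Fin n => Set.Icc (0:ℝ) (2 * π)),
    Complex.exp (-Complex.I * (∑ j, (ℓ j : ℂ) * (x j : ℂ))) • f x

/-- Partial derivative in the coordinate direction `j`. -/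
def pderiv1 {n : ℕ} {E : Type*} [NormedAddCommGroup E] [NormedSpace ℝ E]
    (j : Fin n) (f : (Fin n → ℝ) → E) : (Fin n → ℝ) → E :=
  fun x => fderiv ℝ f x (Pi.single j 1)

/-- Iterated partial derivative along a list of coordinate directions. -/
def listPDeriv {n : ℕ} {E : Type*} [NormedAddCommGroup E] [NormedSpace ℝ E]
    (f : (Fin n → ℝ) → E) : List (Fin n) → ((Fin n → ℝ) → E)
  | [] => f
  | j :: js => pderiv1 j (listPDeriv f js)

/-- The `C^p` norm: sup over all iterated partial derivatives of order `≤ p` of the sup norm. -/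
def CpNorm {n : ℕ} {E : Type*} [NormedAddCommGroup E] [NormedSpace ℝ E]
    (p : ℕ) (f : (Fin n → ℝ) → E) : ℝ :=
  sSup {r : ℝ | ∃ (ms : List (Fin n)) (x : Fin n → ℝ), ms.length ≤ p ∧ r = ‖listPDeriv f ms x‖}

end

/-!
Let `Δ_h f = f (· + h) - f`. The Taylor-type bound `‖Δ_h^p f‖ ≤ |h|^p ‖f‖_{C^p}` is used twice.

* Since `Δ_h^p f` has Fourier coefficients `(e^{iℓ·h} - 1)^p f̂(ℓ)`, taking `h = (π / ℓ_j) e_j`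
  gives `‖f̂(ℓ)‖ ≤ (π / (2|ℓ_j|))^p ‖f‖_{C^p}` without any integration by parts; with `j` chosen
  to maximise `|ℓ_j|`, these bounds are summable over `ℤⁿ` as soon as `p > n`.
* Up to sign, `Δ_h^p f (x)` is `f (x) - ∑_{k < p} (-1)^k (p choose k+1) f (x + (k+1) h)`. Averaging
  over `h = σ z` with `z` a standard Gaussian vector, the subtracted sum becomes a smoothing of `f`
  at distance `O(σ^p)` from `f`. It multiplies `f̂(ℓ)` by a combination of the Gaussian factors
  `e^{-((k+1) σ |ℓ|₂)² / 2}`, each of which absorbs `e^{σ|ℓ|}` because `t ≤ (t² + 1) / 2`.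
-/

section FiniteDifferences

open scoped fwdDiff

variable {n p : ℕ} {E : Type*} [NormedAddCommGroup E] [NormedSpace ℝ E] {f : (Fin n → ℝ) → E}

lemma l1R_nonneg (x : Fin n → ℝ) : 0 ≤ l1R x :=
  Finset.sum_nonneg fun _ _ => abs_nonneg _

lemma l1R_smul (c : ℝ) (x : Fin n → ℝ) : l1R (c • x) = |c| * l1R x := by
  simp only [l1R, Pi.smul_apply, smul_eq_mul, abs_mul, Finset.mul_sum]

lemma l1R_single (j : Fin n) (t : ℝ) : l1R (Pi.single j t) = |t| := by
  rw [l1R, Finset.sum_eq_single j (fun i _ hij => by simp [hij]) (by simp), Pi.single_eq_same]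

lemma contDiff_pderiv1 {m : ℕ} (hf : ContDiff ℝ (m + 1 : ℕ) f) (j : Fin n) :
    ContDiff ℝ m (pderiv1 j f) :=
  (hf.fderiv_right (m := m) (by norm_cast)).clm_apply contDiff_const

lemma contDiff_listPDeriv {m : ℕ} (ms : List (Fin n)) (hf : ContDiff ℝ (m + ms.length : ℕ) f) :
    ContDiff ℝ m (listPDeriv f ms) := by
  induction ms generalizing m with
  | nil => exact hf
  | cons j js ih =>
    refine contDiff_pderiv1 (ih ?_) j
    rwa [List.length_cons, ← add_assoc, add_right_comm] at hf

lemma differentiable_listPDeriv {ms : List (Fin n)} (hf : ContDiff ℝ (ms.length + 1 : ℕ) f) :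
    Differentiable ℝ (listPDeriv f ms) :=
  (contDiff_listPDeriv (m := 1) ms (by rwa [add_comm])).differentiable (by norm_num)

lemma listPDeriv_comp_add_right (f : (Fin n → ℝ) → E) (c : Fin n → ℝ) (ms : List (Fin n)) :
    listPDeriv (fun x => f (x + c)) ms = fun x => listPDeriv f ms (x + c) := by
  induction ms with
  | nil => rfl
  | cons j js ih => funext x; simp only [listPDeriv, pderiv1, ih, fderiv_comp_add_right]

lemma pderiv1_fwdDiff (hf : Differentiable ℝ f) (j : Fin n) (h : Fin n → ℝ) :
    pderiv1 j (Δ_[h] f) = Δ_[h] (pderiv1 j f) := by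
  funext x
  have hshift : DifferentiableAt ℝ (fun y => f (y + h)) x := by fun_prop
  have hsub : fderiv ℝ (Δ_[h] f) x = fderiv ℝ f (x + h) - fderiv ℝ f x := by
    rw [← fderiv_comp_add_right h]
    exact fderiv_fun_sub hshift (hf x)
  simp only [pderiv1, hsub, sub_apply, fwdDiff]

lemma listPDeriv_fwdDiff (h : Fin n → ℝ) {ms : List (Fin n)} (hf : ContDiff ℝ (ms.length : ℕ) f) :
    listPDeriv (Δ_[h] f) ms = Δ_[h] (listPDeriv f ms) := by
  induction ms with
  | nil => rfl
  | cons j js ih =>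
    rw [listPDeriv, ih (hf.of_le (by simp)), listPDeriv,
      pderiv1_fwdDiff (differentiable_listPDeriv hf)]

lemma norm_fderiv_apply_le_l1R_mul {x : Fin n → ℝ} {M : ℝ} (hM : ∀ j, ‖pderiv1 j f x‖ ≤ M)
    (h : Fin n → ℝ) : ‖fderiv ℝ f x h‖ ≤ l1R h * M := by
  calc ‖fderiv ℝ f x h‖ = ‖∑ j, h j • pderiv1 j f x‖ := by
        conv_lhs => rw [← Finset.univ_sum_single h, map_sum]
        simp only [pderiv1, ← map_smul, ← Pi.single_smul, smul_eq_mul, mul_one]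
    _ ≤ ∑ j, |h j| * M := norm_sum_le_of_le _ fun j _ => by
        rw [norm_smul, Real.norm_eq_abs]
        exact mul_le_mul_of_nonneg_left (hM j) (abs_nonneg _)
    _ = l1R h * M := by rw [l1R, Finset.sum_mul]

lemma norm_fwdDiff_le_l1R_mul {M : ℝ} (hf : Differentiable ℝ f)
    (hM : ∀ j x, ‖pderiv1 j f x‖ ≤ M) (h x : Fin n → ℝ) : ‖Δ_[h] f x‖ ≤ l1R h * M := by
  have hderiv (t : ℝ) :
      HasDerivAt (fun t : ℝ => f (x + t • h)) (fderiv ℝ f (x + t • h) h) t := by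
    have hline : HasDerivAt (fun t : ℝ => x + t • h) h t := by
      simpa using ((hasDerivAt_id t).smul_const h).const_add x
    exact (hf (x + t • h)).hasFDerivAt.comp_hasDerivAt t hline
  simpa [fwdDiff] using norm_image_sub_le_of_norm_deriv_le_segment_01'
    (fun t _ => (hderiv t).hasDerivWithinAt)
    (fun t _ => norm_fderiv_apply_le_l1R_mul (fun j => hM j _) h)

lemma norm_fwdDiff_iter_le_l1R_pow_mul (h : Fin n → ℝ) {M : ℝ} (hf : ContDiff ℝ p f)
    (hM : ∀ ms : List (Fin n), ms.length = p → ∀ x, ‖listPDeriv f ms x‖ ≤ M) (x : Fin n → ℝ) :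
    ‖(Δ_[h])^[p] f x‖ ≤ l1R h ^ p * M := by
  induction p generalizing f M with
  | zero => rw [pow_zero, one_mul]; exact hM [] rfl x
  | succ p ih =>
    have hfp : ContDiff ℝ p f := hf.of_le (by norm_cast; omega)
    rw [Function.iterate_succ_apply, pow_succ, mul_assoc]
    refine ih ((hfp.comp (contDiff_id.add contDiff_const)).sub hfp) fun ms hms y => ?_
    subst hms
    rw [listPDeriv_fwdDiff h hfp]
    exact norm_fwdDiff_le_l1R_mul (differentiable_listPDeriv hf)
      (fun j z => hM (j :: ms) rfl z) h y

end FiniteDifferences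

section Periodic

open scoped fwdDiff

variable {n p : ℕ} {E : Type*}

/-- The basis `2π e_j` of `ℝⁿ`, whose `ℤ`-span is the period lattice of the torus `𝕋ⁿ`; it gives
access to the library on lattices and their fundamental domains. -/
noncomputable def twoPiBasis (n : ℕ) : Module.Basis (Fin n) ℝ (Fin n → ℝ) :=
  (Pi.basisFun ℝ (Fin n)).unitsSMul fun _ => Units.mk0 (2 * π) two_pi_pos.ne'

lemma fundamentalDomain_twoPiBasis (n : ℕ) :
    ZSpan.fundamentalDomain (twoPiBasis n) = Set.univ.pi fun _ => Set.Ico 0 (2 * π) := by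
  ext x
  simp only [ZSpan.mem_fundamentalDomain, twoPiBasis, Module.Basis.repr_unitsSMul,
    Pi.basisFun_repr, Units.smul_def, Units.val_inv_eq_inv_val, Units.val_mk0, smul_eq_mul,
    inv_mul_eq_div, Set.mem_univ_pi, Set.mem_Ico, le_div_iff₀ two_pi_pos, zero_mul,
    div_lt_one two_pi_pos]

lemma Periodic2Pi.add_mem_span {f : (Fin n → ℝ) → E} (hf : Periodic2Pi f) (x : Fin n → ℝ)
    {w : Fin n → ℝ} (hw : w ∈ Submodule.span ℤ (Set.range (twoPiBasis n))) : f (x + w) = f x := by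
  obtain ⟨ℓ, rfl⟩ := (Submodule.mem_span_range_iff_exists_fun ℤ).1 hw
  rw [← hf x ℓ]
  congr 1
  funext j
  simp [twoPiBasis, Module.Basis.unitsSMul_apply, Pi.single_apply, Units.smul_def, mul_comm]

lemma Periodic2Pi.comp_add_right {f : (Fin n → ℝ) → E} (hf : Periodic2Pi f) (c : Fin n → ℝ) :
    Periodic2Pi fun x => f (x + c) := fun x ℓ => by
  refine Eq.trans (congrArg f ?_) (hf (x + c) ℓ)
  funext j
  simp only [Pi.add_apply]
  ring

variable [NormedAddCommGroup E]

lemma Periodic2Pi.fwdDiff {f : (Fin n → ℝ) → E} (hf : Periodic2Pi f) (h : Fin n → ℝ) :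
    Periodic2Pi (Δ_[h] f) :=
  fun x ℓ => congrArg₂ (· - ·) (hf.comp_add_right h x ℓ) (hf x ℓ)

lemma Periodic2Pi.exists_norm_le {f : (Fin n → ℝ) → E} (hf : Periodic2Pi f) (hc : Continuous f) :
    ∃ M, ∀ x, ‖f x‖ ≤ M := by
  obtain ⟨M, hM⟩ := (IsZLattice.isCompact_range_of_periodic
    (Submodule.span ℤ (Set.range (twoPiBasis n))) f hc
    fun x w hw => hf.add_mem_span x hw).isBounded.exists_norm_le
  exact ⟨M, fun x => hM _ ⟨x, rfl⟩⟩

lemma Periodic2Pi.integrable_comp {X : Type*} [TopologicalSpace X] [MeasurableSpace X]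
    [OpensMeasurableSpace X] [SecondCountableTopology X] {μ : Measure X} [IsFiniteMeasure μ]
    {f : (Fin n → ℝ) → E} (hf : Periodic2Pi f) (hc : Continuous f) {g : X → Fin n → ℝ}
    (hg : Continuous g) : Integrable (fun z => f (g z)) μ := by
  obtain ⟨M, hM⟩ := hf.exists_norm_le hc
  exact .of_bound (hc.comp hg).aestronglyMeasurable M (.of_forall fun z => hM (g z))

variable [NormedSpace ℝ E]

lemma periodic2Pi_listPDeriv {f : (Fin n → ℝ) → E} (hf : Periodic2Pi f) (ms : List (Fin n)) :
    Periodic2Pi (listPDeriv f ms) := fun x ℓ => by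
  have hshift : (fun y => f (y + fun j => 2 * π * (ℓ j : ℝ))) = f := funext fun y => hf y ℓ
  have h := listPDeriv_comp_add_right f (fun j => 2 * π * (ℓ j : ℝ)) ms
  rw [hshift] at h
  exact (congrFun h x).symm

lemma cpNorm_nonneg (p : ℕ) (f : (Fin n → ℝ) → E) : 0 ≤ CpNorm p f :=
  Real.sSup_nonneg (by rintro _ ⟨ms, x, -, rfl⟩; exact norm_nonneg _)

lemma norm_listPDeriv_le_cpNorm {f : (Fin n → ℝ) → E} (hf : ContDiff ℝ p f) (hper : Periodic2Pi f)
    {ms : List (Fin n)} (hms : ms.length ≤ p) (x : Fin n → ℝ) :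
    ‖listPDeriv f ms x‖ ≤ CpNorm p f := by
  have hbdd (l : List (Fin n)) (hl : l.length ≤ p) :
      BddAbove (Set.range fun y => ‖listPDeriv f l y‖) := by
    have hc : Continuous (listPDeriv f l) :=
      (contDiff_listPDeriv (m := 0) l (hf.of_le (by simpa using hl))).continuous
    obtain ⟨M, hM⟩ := (periodic2Pi_listPDeriv hper l).exists_norm_le hc
    exact ⟨M, Set.forall_mem_range.2 hM⟩
  refine le_csSup ?_ ⟨ms, x, hms, rfl⟩
  refine ((List.finite_length_le (Fin n) p).bddAbove_biUnion.2 hbdd).mono ?_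
  rintro _ ⟨l, y, hl, rfl⟩
  exact Set.mem_biUnion hl ⟨y, rfl⟩

lemma norm_le_cpNorm {f : (Fin n → ℝ) → E} (hf : ContDiff ℝ p f) (hper : Periodic2Pi f)
    (x : Fin n → ℝ) : ‖f x‖ ≤ CpNorm p f :=
  norm_listPDeriv_le_cpNorm hf hper (ms := []) p.zero_le x

lemma norm_fwdDiff_iter_le_cpNorm {f : (Fin n → ℝ) → E} (hf : ContDiff ℝ p f)
    (hper : Periodic2Pi f) (h x : Fin n → ℝ) : ‖(Δ_[h])^[p] f x‖ ≤ l1R h ^ p * CpNorm p f :=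
  norm_fwdDiff_iter_le_l1R_pow_mul h hf
    (fun _ hms => norm_listPDeriv_le_cpNorm hf hper hms.le) x

end Periodic

section FourierCoefficients

open scoped fwdDiff Pointwise

lemma setIntegral_fundamentalDomain_comp_add_right {ι V E : Type*} [Finite ι]
    [NormedAddCommGroup V] [NormedSpace ℝ V] [MeasurableSpace V] [BorelSpace V]
    [NormedAddCommGroup E] [NormedSpace ℝ E] (b : Module.Basis ι ℝ V) (μ : Measure V)
    [μ.IsAddLeftInvariant] {F : V → E}
    (hF : ∀ x, ∀ w ∈ Submodule.span ℤ (Set.range b), F (x + w) = F x) (c : V) :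
    ∫ x in ZSpan.fundamentalDomain b, F (x + c) ∂μ = ∫ x in ZSpan.fundamentalDomain b, F x ∂μ := by
  have hcountable : Countable (Submodule.span ℤ (Set.range b)).toAddSubgroup :=
    inferInstanceAs (Countable (Submodule.span ℤ (Set.range b)))
  have hD := ZSpan.isAddFundamentalDomain' b μ
  have hinv (g : (Submodule.span ℤ (Set.range b)).toAddSubgroup) (x : V) : F (g +ᵥ x) = F x := by
    rw [AddSubgroup.vadd_def, vadd_eq_add, add_comm]
    exact hF x g g.2
  have himage : (· + c) '' ZSpan.fundamentalDomain b = c +ᵥ ZSpan.fundamentalDomain b := by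
    simp only [← Set.image_vadd, vadd_eq_add, add_comm]
  rw [← (measurePreserving_add_right μ c).setIntegral_image_emb
      (MeasurableEquiv.addRight c).measurableEmbedding F, himage]
  exact (hD.vadd_of_comm c).setIntegral_eq hD hinv

/-- The closed period cell `[0, 2π]ⁿ` of the torus `𝕋ⁿ`, over which Fourier coefficients are
integrated. -/
def torusCell (n : ℕ) : Set (Fin n → ℝ) := Set.Icc 0 fun _ => 2 * π

/-- The character `x ↦ e^{i ℓ·x}` of the torus `𝕋ⁿ`, as a function on `ℝⁿ`. -/
noncomputable def torusChar {n : ℕ} (ℓ : Fin n → ℤ) (x : Fin n → ℝ) : ℂ :=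
  Complex.exp ((∑ j, ℓ j * x j : ℝ) * Complex.I)

variable {n p : ℕ} {E : Type*} [NormedAddCommGroup E]

lemma Periodic2Pi.setIntegral_torusCell_comp_add_right [NormedSpace ℝ E] {F : (Fin n → ℝ) → E}
    (hF : Periodic2Pi F) (c : Fin n → ℝ) :
    ∫ x in torusCell n, F (x + c) = ∫ x in torusCell n, F x := by
  have hae : ZSpan.fundamentalDomain (twoPiBasis n) =ᵐ[volume] torusCell n := by
    rw [fundamentalDomain_twoPiBasis]
    exact Measure.univ_pi_Ico_ae_eq_Icc
  rw [← setIntegral_congr_set hae, ← setIntegral_congr_set hae]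
  exact setIntegral_fundamentalDomain_comp_add_right _ _ (fun x _ => hF.add_mem_span x) c

instance isFiniteMeasure_restrict_torusCell (n : ℕ) :
    IsFiniteMeasure ((volume : Measure (Fin n → ℝ)).restrict (torusCell n)) :=
  isFiniteMeasure_restrict.2 isCompact_Icc.measure_lt_top.ne

lemma volume_real_torusCell (n : ℕ) : volume.real (torusCell n) = (2 * π) ^ n := by
  have h : (0 : Fin n → ℝ) ≤ fun _ => 2 * π := fun _ => two_pi_pos.le
  simp [torusCell, Measure.real, Real.volume_Icc_pi_toReal h]

@[simp]
lemma torusChar_zero_left (x : Fin n → ℝ) : torusChar 0 x = 1 := by simp [torusChar]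

@[simp]
lemma torusChar_zero_right (ℓ : Fin n → ℤ) : torusChar ℓ 0 = 1 := by simp [torusChar]

lemma torusChar_add (ℓ : Fin n → ℤ) (x y : Fin n → ℝ) :
    torusChar ℓ (x + y) = torusChar ℓ x * torusChar ℓ y := by
  simp [torusChar, ← Complex.exp_add, mul_add, add_mul, Finset.sum_add_distrib]

lemma torusChar_mul_torusChar_neg (ℓ : Fin n → ℤ) (x : Fin n → ℝ) :
    torusChar ℓ x * torusChar ℓ (-x) = 1 := by
  rw [← torusChar_add, add_neg_cancel, torusChar_zero_right]

@[simp]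
lemma norm_torusChar (ℓ : Fin n → ℤ) (x : Fin n → ℝ) : ‖torusChar ℓ x‖ = 1 :=
  Complex.norm_exp_ofReal_mul_I _

@[fun_prop]
lemma continuous_torusChar (ℓ : Fin n → ℤ) : Continuous (torusChar ℓ) := by
  unfold torusChar; fun_prop

lemma torusChar_single_pi_div {ℓ : Fin n → ℤ} {j : Fin n} (hj : ℓ j ≠ 0) :
    torusChar ℓ (Pi.single j (π / ℓ j)) = -1 := by
  have hsum : ∑ i, (ℓ i : ℝ) * (Pi.single j (π / ℓ j) : Fin n → ℝ) i = π := by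
    rw [Finset.sum_eq_single j (fun i _ hij => by simp [hij]) (by simp), Pi.single_eq_same,
      mul_div_cancel₀ _ (Int.cast_ne_zero.2 hj)]
  rw [torusChar, hsum, Complex.exp_pi_mul_I]

lemma torusChar_two_pi_mul_int (ℓ m : Fin n → ℤ) : torusChar ℓ (fun j => 2 * π * m j) = 1 := by
  refine Complex.exp_eq_one_iff.2 ⟨∑ j, ℓ j * m j, ?_⟩
  push_cast
  rw [Finset.sum_mul, Finset.sum_mul]
  exact Finset.sum_congr rfl fun j _ => by ring

lemma periodic2Pi_torusChar (ℓ : Fin n → ℤ) : Periodic2Pi (torusChar ℓ) := fun x m => by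
  change torusChar ℓ (x + fun j => 2 * π * (m j : ℝ)) = torusChar ℓ x
  rw [torusChar_add, torusChar_two_pi_mul_int, mul_one]

lemma periodic2Pi_torusChar_neg (ℓ : Fin n → ℤ) : Periodic2Pi fun x => torusChar ℓ (-x) :=
  fun x m => by
    refine Eq.trans (congrArg (torusChar ℓ) ?_) (periodic2Pi_torusChar ℓ (-x) (-m))
    funext j
    simp only [Pi.neg_apply, Int.cast_neg]
    ring

variable [NormedSpace ℂ E] {f g : (Fin n → ℝ) → E}

lemma integrableOn_torusChar_smul (hf : Continuous f) (ℓ : Fin n → ℤ) :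
    IntegrableOn (fun x => torusChar ℓ (-x) • f x) (torusCell n) :=
  Continuous.integrableOn_Icc (by fun_prop)

variable [CompleteSpace E]

lemma fCoeff_eq_setIntegral_torusChar (f : (Fin n → ℝ) → E) (ℓ : Fin n → ℤ) :
    fCoeff f ℓ = ((2 * π) ^ n : ℝ)⁻¹ • ∫ x in torusCell n, torusChar ℓ (-x) • f x := by
  simp only [fCoeff, torusCell, torusChar, Set.pi_univ_Icc]
  congr! 5
  push_cast
  simp [mul_comm]

lemma fCoeff_const_smul (a : ℂ) (f : (Fin n → ℝ) → E) (ℓ : Fin n → ℤ) :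
    fCoeff (fun x => a • f x) ℓ = a • fCoeff f ℓ := by
  simp only [fCoeff_eq_setIntegral_torusChar, smul_comm _ a, integral_smul]

lemma fCoeff_sub (hf : Continuous f) (hg : Continuous g) (ℓ : Fin n → ℤ) :
    fCoeff (fun x => f x - g x) ℓ = fCoeff f ℓ - fCoeff g ℓ := by
  simp only [fCoeff_eq_setIntegral_torusChar, smul_sub]
  rw [integral_sub (integrableOn_torusChar_smul hf ℓ) (integrableOn_torusChar_smul hg ℓ), smul_sub]

lemma fCoeff_finsetSum {ι : Type*} (s : Finset ι) {F : ι → (Fin n → ℝ) → E}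
    (hF : ∀ i ∈ s, Continuous (F i)) (ℓ : Fin n → ℤ) :
    fCoeff (fun x => ∑ i ∈ s, F i x) ℓ = ∑ i ∈ s, fCoeff (F i) ℓ := by
  simp only [fCoeff_eq_setIntegral_torusChar, Finset.smul_sum]
  rw [integral_finsetSum s fun i hi => integrableOn_torusChar_smul (hF i hi) ℓ, Finset.smul_sum]

lemma fCoeff_comp_add_right (hf : Periodic2Pi f) (c : Fin n → ℝ) (ℓ : Fin n → ℤ) :
    fCoeff (fun x => f (x + c)) ℓ = torusChar ℓ c • fCoeff f ℓ := by
  have hper : Periodic2Pi fun x => torusChar ℓ (-x) • f x := fun x m =>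
    congrArg₂ (· • ·) (periodic2Pi_torusChar_neg ℓ x m) (hf x m)
  have hchar (x : Fin n → ℝ) :
      torusChar ℓ c • torusChar ℓ (-(x + c)) • f (x + c) = torusChar ℓ (-x) • f (x + c) := by
    rw [smul_smul, neg_add, torusChar_add, mul_left_comm, torusChar_mul_torusChar_neg, mul_one]
  rw [fCoeff_eq_setIntegral_torusChar, fCoeff_eq_setIntegral_torusChar,
    ← hper.setIntegral_torusCell_comp_add_right c, smul_comm (torusChar ℓ c),
    ← integral_smul (torusChar ℓ c)]
  simp only [hchar]

lemma norm_fCoeff_le {M : ℝ} (hM : ∀ x, ‖f x‖ ≤ M) (ℓ : Fin n → ℤ) : ‖fCoeff f ℓ‖ ≤ M := by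
  have hpos : 0 < (2 * π) ^ n := by positivity
  have hint : ‖∫ x in torusCell n, torusChar ℓ (-x) • f x‖ ≤ M * (2 * π) ^ n := by
    rw [← volume_real_torusCell]
    refine norm_setIntegral_le_of_norm_le_const isCompact_Icc.measure_lt_top fun x _ => ?_
    rw [norm_smul, norm_torusChar, one_mul]
    exact hM x
  rw [fCoeff_eq_setIntegral_torusChar, norm_smul, norm_inv, Real.norm_of_nonneg hpos.le,
    inv_mul_le_iff₀ hpos, mul_comm]
  exact hint

lemma fCoeff_fwdDiff (hf : Periodic2Pi f) (hc : Continuous f) (h : Fin n → ℝ) (ℓ : Fin n → ℤ) :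
    fCoeff (Δ_[h] f) ℓ = (torusChar ℓ h - 1) • fCoeff f ℓ := by
  rw [sub_smul, one_smul, ← fCoeff_comp_add_right hf]
  exact fCoeff_sub (by fun_prop) hc ℓ

lemma fCoeff_fwdDiff_iter (hf : Periodic2Pi f) (hc : Continuous f) (h : Fin n → ℝ) (p : ℕ)
    (ℓ : Fin n → ℤ) : fCoeff ((Δ_[h])^[p] f) ℓ = (torusChar ℓ h - 1) ^ p • fCoeff f ℓ := by
  induction p generalizing f with
  | zero => simp
  | succ p ih =>
    have hc' : Continuous (Δ_[h] f) := (hc.comp (continuous_add_const h)).sub hc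
    rw [Function.iterate_succ_apply, ih (hf.fwdDiff h) hc', fCoeff_fwdDiff hf hc, smul_smul,
      pow_succ]

lemma norm_torusChar_sub_one_pow_mul_norm_fCoeff_le (hf : ContDiff ℝ p f) (hper : Periodic2Pi f)
    (h : Fin n → ℝ) (ℓ : Fin n → ℤ) :
    ‖torusChar ℓ h - 1‖ ^ p * ‖fCoeff f ℓ‖ ≤ l1R h ^ p * CpNorm p f := by
  rw [← norm_pow, ← norm_smul, ← fCoeff_fwdDiff_iter hper hf.continuous]
  exact norm_fCoeff_le (norm_fwdDiff_iter_le_cpNorm hf hper h) ℓ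

lemma norm_fCoeff_le_div_abs_pow_mul_cpNorm (hf : ContDiff ℝ p f) (hper : Periodic2Pi f)
    {ℓ : Fin n → ℤ} {j : Fin n} (hj : ℓ j ≠ 0) :
    ‖fCoeff f ℓ‖ ≤ (π / 2 / |(ℓ j : ℝ)|) ^ p * CpNorm p f := by
  have h := norm_torusChar_sub_one_pow_mul_norm_fCoeff_le hf hper (Pi.single j (π / ℓ j)) ℓ
  have hnorm : ‖(-1 - 1 : ℂ)‖ = 2 := by norm_num
  rw [torusChar_single_pi_div hj, hnorm, l1R_single, abs_div, abs_of_pos pi_pos] at h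
  rwa [div_right_comm, div_pow _ (2 : ℝ), div_mul_eq_mul_div, le_div_iff₀' (by positivity)]

end FourierCoefficients

section DecayWeight

variable {n p : ℕ}

/-- The bound on the `ℓ`-th Fourier coefficient of a map of unit `C^p` norm; it is set to `1` at
`ℓ = 0`, where the formula for `ℓ ≠ 0` has a junk value. -/
noncomputable def decayWeight (p : ℕ) : (Fin n → ℤ) → ℝ :=
  Function.update (fun ℓ => (π / 2 / ‖ℓ‖) ^ p) 0 1

lemma decayWeight_zero : decayWeight p (0 : Fin n → ℤ) = 1 := Function.update_self ..

lemma decayWeight_of_ne_zero {ℓ : Fin n → ℤ} (hℓ : ℓ ≠ 0) :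
    decayWeight p ℓ = (π / 2 / ‖ℓ‖) ^ p := Function.update_of_ne hℓ ..

lemma decayWeight_nonneg (ℓ : Fin n → ℤ) : 0 ≤ decayWeight p ℓ := by
  rcases eq_or_ne ℓ 0 with rfl | hℓ
  · exact decayWeight_zero.symm ▸ zero_le_one
  · rw [decayWeight_of_ne_zero hℓ]; positivity

lemma summable_int_norm_inv_pow (hp : n < p) : Summable fun ℓ : Fin n → ℤ => ‖ℓ‖⁻¹ ^ p := by
  let L := Submodule.span ℤ (Set.range (Pi.basisFun ℝ (Fin n)))
  let e (ℓ : Fin n → ℤ) : L := ⟨fun j => ℓ j,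
    (Submodule.mem_span_range_iff_exists_fun ℤ).2 ⟨ℓ, by ext; simp [Pi.single_apply]⟩⟩
  have he : Function.Injective e := fun ℓ m h => funext fun j => by
    simpa [e] using congrFun (congrArg Subtype.val h) j
  have hnorm (ℓ : Fin n → ℤ) : ‖e ℓ‖ = ‖ℓ‖ := by
    simp only [e, Submodule.coe_norm, Pi.norm_def]
    rfl
  have hrank : Module.finrank ℤ L < p := by rwa [ZLattice.rank ℝ L, Module.finrank_fin_fun]
  simpa only [Function.comp_def, hnorm] using
    (ZLattice.summable_norm_pow_inv L p hrank).comp_injective he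

lemma summable_decayWeight (hp : n < p) : Summable (decayWeight p : (Fin n → ℤ) → ℝ) := by
  refine Summable.update ?_ 0 1
  simpa only [div_eq_mul_inv (π / 2), mul_pow] using (summable_int_norm_inv_pow hp).mul_left _

variable {E : Type*} [NormedAddCommGroup E] [NormedSpace ℂ E] [CompleteSpace E]

lemma norm_fCoeff_le_decayWeight_mul_cpNorm {f : (Fin n → ℝ) → E} (hf : ContDiff ℝ p f)
    (hper : Periodic2Pi f) (ℓ : Fin n → ℤ) : ‖fCoeff f ℓ‖ ≤ decayWeight p ℓ * CpNorm p f := by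
  rcases eq_or_ne ℓ 0 with rfl | hℓ
  · rw [decayWeight_zero, one_mul]
    exact norm_fCoeff_le (norm_le_cpNorm hf hper) 0
  · obtain ⟨i, -⟩ := Function.ne_iff.1 hℓ
    have : Nonempty (Fin n) := ⟨i⟩
    obtain ⟨j, hj : ‖ℓ j‖ = ‖ℓ‖⟩ := (IsGreatest.pi_norm ℓ).1
    have hj0 : ℓ j ≠ 0 := norm_ne_zero_iff.1 (hj.trans_ne (norm_ne_zero_iff.2 hℓ))
    rw [decayWeight_of_ne_zero hℓ, ← hj, Int.norm_eq_abs]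
    exact norm_fCoeff_le_div_abs_pow_mul_cpNorm hf hper hj0

end DecayWeight

section DilatedAverage

variable {n : ℕ} {E : Type*} [NormedAddCommGroup E] [NormedSpace ℂ E] {f : (Fin n → ℝ) → E}
  {μ : Measure (Fin n → ℝ)}

/-- The average of the translates `f (x + c z)` of `f` over a random displacement `z` of law `μ`
dilated by `c`. -/
noncomputable def dilatedAverage (μ : Measure (Fin n → ℝ)) (c : ℝ) (f : (Fin n → ℝ) → E)
    (x : Fin n → ℝ) : E :=
  ∫ z, f (x + c • z) ∂μ

lemma Periodic2Pi.dilatedAverage (hf : Periodic2Pi f) (c : ℝ) :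
    Periodic2Pi (dilatedAverage μ c f) := fun x ℓ =>
  integral_congr_ae (.of_forall fun z => hf.comp_add_right (c • z) x ℓ)

variable [IsFiniteMeasure μ]

lemma continuous_dilatedAverage (hf : Periodic2Pi f) (hc : Continuous f) (c : ℝ) :
    Continuous (dilatedAverage μ c f) := by
  obtain ⟨M, hM⟩ := hf.exists_norm_le hc
  refine continuous_of_dominated (bound := fun _ => M) (fun x => ?_)
    (fun x => .of_forall fun z => hM _) (integrable_const M) (.of_forall fun z => by fun_prop)
  exact Continuous.aestronglyMeasurable (by fun_prop)

lemma fCoeff_dilatedAverage [CompleteSpace E] (hf : Periodic2Pi f) (hc : Continuous f) (c : ℝ)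
    (ℓ : Fin n → ℤ) :
    fCoeff (dilatedAverage μ c f) ℓ = (∫ z, torusChar ℓ (c • z) ∂μ) • fCoeff f ℓ := by
  obtain ⟨M, hM⟩ := hf.exists_norm_le hc
  have hint : Integrable (fun w : (Fin n → ℝ) × (Fin n → ℝ) =>
      torusChar ℓ (-w.1) • f (w.1 + c • w.2)) ((volume.restrict (torusCell n)).prod μ) := by
    refine .of_bound (Continuous.aestronglyMeasurable (by fun_prop)) M (.of_forall fun w => ?_)
    rw [norm_smul, norm_torusChar, one_mul]
    exact hM _
  have htranslate (z : Fin n → ℝ) : torusChar ℓ (c • z) • fCoeff f ℓ =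
      ((2 * π) ^ n : ℝ)⁻¹ • ∫ x in torusCell n, torusChar ℓ (-x) • f (x + c • z) := by
    rw [← fCoeff_comp_add_right hf, fCoeff_eq_setIntegral_torusChar]
  simp only [← integral_smul_const, htranslate, integral_smul]
  rw [← integral_integral_swap hint, fCoeff_eq_setIntegral_torusChar]
  simp only [dilatedAverage, integral_smul]

end DilatedAverage

section JacksonSmoothing

open scoped fwdDiff

variable {n p : ℕ}

/-- The coefficient `(-1)^k (p choose k+1)` with which Jackson's smoothing of order `p` weighs
translates by `k + 1` steps. -/
def jacksonCoeff (p k : ℕ) : ℤ := (-1) ^ k * p.choose (k + 1)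

lemma neg_one_pow_smul_fwdDiff_iter {M G : Type*} [AddCommMonoid M] [AddCommGroup G] (h : M)
    (f : M → G) (p : ℕ) (x : M) :
    (-1 : ℤ) ^ p • (Δ_[h])^[p] f x =
      f x - ∑ k ∈ Finset.range p, jacksonCoeff p k • f (x + (k + 1) • h) := by
  have hsign {k : ℕ} (hk : k ≤ p) : (-1 : ℤ) ^ p * (-1) ^ (p - k) = (-1) ^ k := by
    rw [← pow_add, ← Nat.sub_add_cancel hk, Nat.add_sub_cancel, add_right_comm, pow_add,
      Even.neg_one_pow ⟨_, rfl⟩, one_mul]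
  rw [fwdDiff_iter_eq_sum_shift, Finset.smul_sum, Finset.sum_range_succ', sub_eq_neg_add,
    ← Finset.sum_neg_distrib]
  congr 1
  · refine Finset.sum_congr rfl fun k hk => ?_
    rw [smul_smul, ← mul_assoc, hsign (Finset.mem_range.1 hk), ← neg_smul, jacksonCoeff, pow_succ]
    congr 1
    ring
  · simp [smul_smul, ← mul_pow]

lemma sum_jacksonCoeff (hp : p ≠ 0) : ∑ k ∈ Finset.range p, jacksonCoeff p k = 1 := by
  have h := Int.alternating_sum_range_choose_of_ne hp
  rw [Finset.sum_range_succ', pow_zero, Nat.choose_zero_right, Nat.cast_one, one_mul] at h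
  rw [← neg_eq_of_add_eq_zero_right h, ← Finset.sum_neg_distrib]
  exact Finset.sum_congr rfl fun k _ => by
    rw [jacksonCoeff, pow_succ, mul_neg_one, neg_mul, neg_neg]

lemma sum_norm_jacksonCoeff_le (p : ℕ) :
    ∑ k ∈ Finset.range p, ‖(jacksonCoeff p k : ℂ)‖ ≤ 2 ^ p := by
  calc ∑ k ∈ Finset.range p, ‖(jacksonCoeff p k : ℂ)‖
      = ∑ k ∈ Finset.range p, (p.choose (k + 1) : ℝ) := by simp [jacksonCoeff]
    _ ≤ ∑ k ∈ Finset.range (p + 1), (p.choose k : ℝ) := by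
        rw [Finset.sum_range_succ']
        exact le_add_of_nonneg_right (Nat.cast_nonneg _)
    _ = 2 ^ p := by exact_mod_cast Nat.sum_range_choose p

variable {E : Type*} [NormedAddCommGroup E] [NormedSpace ℂ E] {f : (Fin n → ℝ) → E}
  {μ : Measure (Fin n → ℝ)}

/-- Jackson's smoothing of `f` of order `p` at scale `σ` with kernel `μ`: the combination of the
averages of `f` at scales `σ, 2σ, …, pσ` whose distance to `f` is an average of `p`-th finite
differences of `f`. -/
noncomputable def jacksonSmoothing (μ : Measure (Fin n → ℝ)) (p : ℕ) (σ : ℝ)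
    (f : (Fin n → ℝ) → E) (x : Fin n → ℝ) : E :=
  ∑ k ∈ Finset.range p, (jacksonCoeff p k : ℂ) • dilatedAverage μ ((k + 1 : ℕ) * σ) f x

lemma Periodic2Pi.jacksonSmoothing (hf : Periodic2Pi f) (p : ℕ) (σ : ℝ) :
    Periodic2Pi (jacksonSmoothing μ p σ f) := fun x ℓ =>
  Finset.sum_congr rfl fun _ _ => congrArg _ (hf.dilatedAverage _ x ℓ)

section IsFiniteMeasure

variable [IsFiniteMeasure μ]

lemma continuous_jacksonSmoothing (hf : Periodic2Pi f) (hc : Continuous f) (p : ℕ) (σ : ℝ) :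
    Continuous (jacksonSmoothing μ p σ f) :=
  continuous_finsetSum _ fun _ _ => (continuous_dilatedAverage hf hc _).const_smul _

lemma fCoeff_jacksonSmoothing [CompleteSpace E] (hf : Periodic2Pi f) (hc : Continuous f) (p : ℕ)
    (σ : ℝ) (ℓ : Fin n → ℤ) :
    fCoeff (jacksonSmoothing μ p σ f) ℓ =
      (∑ k ∈ Finset.range p,
        jacksonCoeff p k * ∫ z, torusChar ℓ (((k + 1 : ℕ) * σ) • z) ∂μ) • fCoeff f ℓ := by
  have hcont (k : ℕ) : Continuous fun x =>
      (jacksonCoeff p k : ℂ) • dilatedAverage μ ((k + 1 : ℕ) * σ) f x :=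
    (continuous_dilatedAverage hf hc _).const_smul _
  refine (fCoeff_finsetSum _ (fun k _ => hcont k) ℓ).trans ?_
  simp only [fCoeff_const_smul, fCoeff_dilatedAverage hf hc, smul_smul, Finset.sum_smul]

end IsFiniteMeasure

variable [IsProbabilityMeasure μ]

lemma fCoeff_jacksonSmoothing_zero [CompleteSpace E] (hf : Periodic2Pi f) (hc : Continuous f)
    (hp : p ≠ 0) (σ : ℝ) : fCoeff (jacksonSmoothing μ p σ f) 0 = fCoeff f 0 := by
  have hsum : ∑ k ∈ Finset.range p, (jacksonCoeff p k : ℂ) = 1 := by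
    exact_mod_cast sum_jacksonCoeff hp
  simp [fCoeff_jacksonSmoothing hf hc, hsum]

lemma sub_jacksonSmoothing_eq_integral [CompleteSpace E] (hf : Periodic2Pi f) (hc : Continuous f)
    (p : ℕ) (σ : ℝ) (x : Fin n → ℝ) :
    f x - jacksonSmoothing μ p σ f x = ∫ z, (-1 : ℤ) ^ p • (Δ_[σ • z])^[p] f x ∂μ := by
  have hint (k : ℕ) : Integrable
      (fun z => (jacksonCoeff p k : ℂ) • f (x + ((k + 1 : ℕ) * σ) • z)) μ :=
    (hf.integrable_comp hc (by fun_prop)).smul _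
  have hpoint (z : Fin n → ℝ) : (-1 : ℤ) ^ p • (Δ_[σ • z])^[p] f x =
      f x - ∑ k ∈ Finset.range p, (jacksonCoeff p k : ℂ) • f (x + ((k + 1 : ℕ) * σ) • z) := by
    simp only [neg_one_pow_smul_fwdDiff_iter, Int.cast_smul_eq_zsmul, mul_smul,
      Nat.cast_smul_eq_nsmul]
  simp only [hpoint]
  rw [integral_sub (integrable_const _) (integrable_finsetSum _ fun k _ => hint k),
    integral_finsetSum _ fun k _ => hint k]
  simp [jacksonSmoothing, dilatedAverage, integral_smul]

lemma norm_sub_jacksonSmoothing_le [CompleteSpace E]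
    (hμ : Integrable (fun z => l1R z ^ p) μ) (hf : ContDiff ℝ p f) (hper : Periodic2Pi f)
    (σ : ℝ) (x : Fin n → ℝ) :
    ‖f x - jacksonSmoothing μ p σ f x‖ ≤ (∫ z, l1R z ^ p ∂μ) * |σ| ^ p * CpNorm p f := by
  rw [sub_jacksonSmoothing_eq_integral hper hf.continuous, mul_assoc, ← integral_mul_const]
  refine norm_integral_le_of_norm_le (hμ.mul_const _) (.of_forall fun z => ?_)
  calc ‖(-1 : ℤ) ^ p • (Δ_[σ • z])^[p] f x‖ = ‖(Δ_[σ • z])^[p] f x‖ := by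
        rcases neg_one_pow_eq_or ℤ p with h | h <;> simp [h]
    _ ≤ l1R (σ • z) ^ p * CpNorm p f := norm_fwdDiff_iter_le_cpNorm hf hper _ x
    _ = l1R z ^ p * (|σ| ^ p * CpNorm p f) := by rw [l1R_smul]; ring

end JacksonSmoothing

section GaussianSmoothing

open ProbabilityTheory

variable {n p : ℕ} {σ : ℝ}

/-- The standard Gaussian measure on `ℝⁿ`, on the type `Fin n → ℝ` in which the torus is encoded
rather than on `EuclideanSpace ℝ (Fin n)`. -/
noncomputable def stdGaussianPi (n : ℕ) : Measure (Fin n → ℝ) :=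
  Measure.pi fun _ => gaussianReal 0 1

instance isProbabilityMeasure_stdGaussianPi (n : ℕ) : IsProbabilityMeasure (stdGaussianPi n) :=
  inferInstanceAs (IsProbabilityMeasure (Measure.pi _))

lemma integral_torusChar_smul_stdGaussianPi (ℓ : Fin n → ℤ) (c : ℝ) :
    ∫ z, torusChar ℓ (c • z) ∂stdGaussianPi n = Real.exp (∑ j, -(c * ℓ j) ^ 2 / 2) := by
  have hprod (z : Fin n → ℝ) :
      torusChar ℓ (c • z) = ∏ j, Complex.exp ((c * ℓ j : ℝ) * z j * Complex.I) := by
    rw [torusChar, ← Complex.exp_sum]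
    push_cast
    rw [Finset.sum_mul]
    congr! 2 with j
    simp only [Pi.smul_apply, smul_eq_mul, Complex.ofReal_mul]
    ring
  simp only [hprod]
  rw [stdGaussianPi, integral_fintype_prod_eq_prod
    (f := fun j (x : ℝ) => Complex.exp ((c * ℓ j : ℝ) * x * Complex.I)), Real.exp_sum,
    Complex.ofReal_prod]
  refine Finset.prod_congr rfl fun j _ => ?_
  rw [← charFun_apply_real, charFun_gaussianReal]
  push_cast
  congr 1
  simp only [mul_zero, zero_mul, one_mul, zero_sub]
  ring

lemma integrable_l1R_pow_stdGaussianPi (n p : ℕ) :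
    Integrable (fun z => l1R z ^ p) (stdGaussianPi n) := by
  have hcoord (j : Fin n) : MemLp (fun z : Fin n → ℝ => |z j|) p (stdGaussianPi n) :=
    ((memLp_id_gaussianReal' p (ENNReal.natCast_ne_top p)).comp_measurePreserving
      (measurePreserving_eval (fun _ => gaussianReal 0 1) j)).norm
  have hl1R : MemLp (l1R : (Fin n → ℝ) → ℝ) p (stdGaussianPi n) :=
    memLp_finsetSum _ fun j _ => hcoord j
  simpa only [Real.norm_of_nonneg (l1R_nonneg _)] using hl1R.integrable_norm_pow'

lemma norm_integral_torusChar_smul_mul_exp_le {c : ℝ} (hσ : 0 ≤ σ) (hc : σ ≤ c)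
    (ℓ : Fin n → ℤ) :
    ‖∫ z, torusChar ℓ (c • z) ∂stdGaussianPi n‖ * Real.exp (σ * l1Z ℓ) ≤ Real.exp (n / 2) := by
  rw [integral_torusChar_smul_stdGaussianPi, Complex.norm_real, Real.norm_of_nonneg (exp_nonneg _),
    ← Real.exp_add, Real.exp_le_exp, l1Z, Finset.mul_sum, ← Finset.sum_add_distrib]
  have hterm (j : Fin n) : -(c * ℓ j) ^ 2 / 2 + σ * |(ℓ j : ℝ)| ≤ 1 / 2 := by
    have hsq : (σ * |(ℓ j : ℝ)|) ^ 2 ≤ (c * ℓ j) ^ 2 := by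
      rw [mul_pow, mul_pow, sq_abs]
      gcongr
    linarith [sq_nonneg (σ * |(ℓ j : ℝ)| - 1)]
  calc ∑ j, (-(c * ℓ j) ^ 2 / 2 + σ * |(ℓ j : ℝ)|) ≤ ∑ _j : Fin n, (1 / 2 : ℝ) :=
        Finset.sum_le_sum fun j _ => hterm j
    _ = n / 2 := by simp [div_eq_mul_inv]

variable {E : Type*} [NormedAddCommGroup E] [NormedSpace ℂ E] [CompleteSpace E]
  {f : (Fin n → ℝ) → E}

lemma norm_fCoeff_jacksonSmoothing_mul_exp_le (hσ : 0 ≤ σ) (hf : Periodic2Pi f)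
    (hc : Continuous f) (p : ℕ) (ℓ : Fin n → ℤ) :
    ‖fCoeff (jacksonSmoothing (stdGaussianPi n) p σ f) ℓ‖ * Real.exp (σ * l1Z ℓ) ≤
      2 ^ p * Real.exp (n / 2) * ‖fCoeff f ℓ‖ := by
  have hscale (k : ℕ) : σ ≤ (k + 1 : ℕ) * σ :=
    le_mul_of_one_le_left hσ (Nat.one_le_cast.2 k.succ_pos)
  rw [fCoeff_jacksonSmoothing hf hc, norm_smul, mul_right_comm]
  refine mul_le_mul_of_nonneg_right ?_ (norm_nonneg _)
  calc _ ≤ (∑ k ∈ Finset.range p, ‖(jacksonCoeff p k : ℂ)‖ *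
          ‖∫ z, torusChar ℓ (((k + 1 : ℕ) * σ) • z) ∂stdGaussianPi n‖) * Real.exp (σ * l1Z ℓ) := by
        gcongr
        exact norm_sum_le_of_le _ fun k _ => (norm_mul _ _).le
    _ ≤ ∑ k ∈ Finset.range p, ‖(jacksonCoeff p k : ℂ)‖ * Real.exp (n / 2) := by
        simp only [Finset.sum_mul, mul_assoc]
        gcongr with k
        exact norm_integral_torusChar_smul_mul_exp_le hσ (hscale k) ℓ
    _ ≤ 2 ^ p * Real.exp (n / 2) := by
        rw [← Finset.sum_mul]
        gcongr
        exact sum_norm_jacksonCoeff_le p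

lemma norm_fCoeff_jacksonSmoothing_mul_exp_le_decayWeight (hσ : 0 ≤ σ) (hf : ContDiff ℝ p f)
    (hper : Periodic2Pi f) (ℓ : Fin n → ℤ) :
    ‖fCoeff (jacksonSmoothing (stdGaussianPi n) p σ f) ℓ‖ * Real.exp (σ * l1Z ℓ) ≤
      2 ^ p * Real.exp (n / 2) * CpNorm p f * decayWeight p ℓ :=
  calc _ ≤ 2 ^ p * Real.exp (n / 2) * ‖fCoeff f ℓ‖ :=
        norm_fCoeff_jacksonSmoothing_mul_exp_le hσ hper hf.continuous p ℓ
    _ ≤ 2 ^ p * Real.exp (n / 2) * (decayWeight p ℓ * CpNorm p f) := by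
        gcongr
        exact norm_fCoeff_le_decayWeight_mul_cpNorm hf hper ℓ
    _ = _ := by ring

end GaussianSmoothing

theorem stmt3_general {n p : ℕ} (hp : n < p) :
    ∃ C₁ C₂ : ℝ, 0 < C₁ ∧ 0 < C₂ ∧
      ∀ σ : ℝ, 0 ≤ σ →
      ∀ (E : Type*) [NormedAddCommGroup E] [NormedSpace ℂ E] [CompleteSpace E]
        (f : (Fin n → ℝ) → E), Periodic2Pi f → ContDiff ℝ p f →
      ∃ fσ : (Fin n → ℝ) → E,
        Periodic2Pi fσ ∧ Continuous fσ ∧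
        Summable (fun ℓ : Fin n → ℤ => ‖fCoeff fσ ℓ‖ * Real.exp (σ * l1Z ℓ)) ∧
        (∀ φ : Fin n → ℝ, ‖f φ - fσ φ‖ ≤ C₁ * σ ^ p * CpNorm p f) ∧
        (∑' ℓ : Fin n → ℤ, ‖fCoeff fσ ℓ‖ * Real.exp (σ * l1Z ℓ)) ≤ C₂ * CpNorm p f ∧
        fCoeff fσ 0 = fCoeff f 0 := by
  have hW : Summable (decayWeight p : (Fin n → ℤ) → ℝ) := summable_decayWeight hp
  have hWpos : 0 < ∑' ℓ : Fin n → ℤ, decayWeight p ℓ :=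
    hW.tsum_pos decayWeight_nonneg 0 (decayWeight_zero.symm ▸ zero_lt_one)
  have hmoment : 0 ≤ ∫ z, l1R z ^ p ∂stdGaussianPi n :=
    integral_nonneg fun z => pow_nonneg (l1R_nonneg z) p
  refine ⟨(∫ z, l1R z ^ p ∂stdGaussianPi n) + 1,
    2 ^ p * Real.exp (n / 2) * ∑' ℓ : Fin n → ℤ, decayWeight p ℓ, by positivity, by positivity,
    fun σ hσ E _ _ _ f hper hf => ⟨jacksonSmoothing (stdGaussianPi n) p σ f, ?_⟩⟩
  have hle := norm_fCoeff_jacksonSmoothing_mul_exp_le_decayWeight hσ hf hper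
  have hmajor := hW.mul_left (2 ^ p * Real.exp (n / 2) * CpNorm p f)
  have hsum := hmajor.of_nonneg_of_le (fun _ => by positivity) hle
  refine ⟨hper.jacksonSmoothing p σ, continuous_jacksonSmoothing hper hf.continuous p σ, hsum,
    fun φ => ?_, ?_, fCoeff_jacksonSmoothing_zero hper hf.continuous (Nat.ne_zero_of_lt hp) σ⟩
  · have hμ := integrable_l1R_pow_stdGaussianPi n p
    refine (norm_sub_jacksonSmoothing_le hμ hf hper σ φ).trans ?_
    rw [abs_of_nonneg hσ]
    gcongr
    · exact cpNorm_nonneg p f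
    · exact le_add_of_nonneg_right zero_le_one
  · refine (hsum.tsum_le_tsum hle hmajor).trans_eq ?_
    rw [tsum_mul_left, mul_right_comm]

/-- Analytic smoothing of a `C^p` operator-valued map on `𝕋ⁿ`
(Jackson–Moser–Zehnder-type): for `p ≥ n+1` and `σ ∈ (0,1)` there is `A_σ` with exponentially
decaying Fourier coefficients such that `sup‖A - A_σ‖ ≤ C₁ σ^p ‖A‖_{C^p}`,
`Σ_ℓ ‖Â_σ(ℓ)‖ e^{σ|ℓ|} ≤ C₂ ‖A‖_{C^p}` and `⟨A_σ⟩ = ⟨A⟩`, with `C₁, C₂` depending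
only on `n` and `p`. -/
theorem stmt3 {n p : ℕ} (hn : 1 ≤ n) (hp : n + 1 ≤ p) :
    ∃ C₁ C₂ : ℝ, 0 < C₁ ∧ 0 < C₂ ∧
      ∀ (σ : ℝ), σ ∈ Set.Ioo (0:ℝ) 1 →
      ∀ (H : Type) (_ : NormedAddCommGroup H) (_ : InnerProductSpace ℂ H) (_ : CompleteSpace H)
        (A : (Fin n → ℝ) → (H →L[ℂ] H)), Periodic2Pi A → ContDiff ℝ p A →
      ∃ Aσ : (Fin n → ℝ) → (H →L[ℂ] H),
        Periodic2Pi Aσ ∧ Continuous Aσ ∧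
        Summable (fun ℓ : Fin n → ℤ => ‖fCoeff Aσ ℓ‖ * Real.exp (σ * l1Z ℓ)) ∧
        (∀ φ : Fin n → ℝ, ‖A φ - Aσ φ‖ ≤ C₁ * σ ^ p * CpNorm p A) ∧
        (∑' ℓ : Fin n → ℤ, ‖fCoeff Aσ ℓ‖ * Real.exp (σ * l1Z ℓ)) ≤ C₂ * CpNorm p A ∧
        fCoeff Aσ 0 = fCoeff A 0 := by
  obtain ⟨C₁, C₂, hC₁, hC₂, h⟩ := stmt3_general hp
  exact ⟨C₁, C₂, hC₁, hC₂, fun σ hσ H _ _ _ => h σ hσ.1.le (H →L[ℂ] H)⟩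
end

section
/- Let n ≥ 1, γ, τ > 0, ν ∈ ℝⁿ a Diophantine vector in DC^n(γ, τ), σ ≥ 0, K > 0, H a complex Hilbert space, and A : 𝕋ⁿ → B(H) with ‖A‖_σ := Σ_{ℓ ∈ ℤⁿ} ‖Â(ℓ)‖_op e^{σ|ℓ|} < ∞. Then the trigonometric polynomial G(φ) := − Σ_{ℓ ∈ ℤⁿ, 0 < |ℓ| ≤ K} (Â(ℓ)/(i ν·ℓ)) e^{i ℓ·φ} is well defined, solves the homological equation (ν·∂_φ)G(φ) + A(φ) = A^{uv}(φ) + ⟨A⟩ for all φ ∈ 𝕋ⁿ, and satisfies ‖G‖_σ ≤ γ^{-1} K^τ ‖A‖_σ. -/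
open MeasureTheory Real Filter

/-!
The modes `e^{i ℓ·φ}` are eigenfunctions of `ν·∂_φ`, with eigenvalues `i ν·ℓ`, so dividing the
coefficients of `A` by `-i ν·ℓ` for `0 < |ℓ| ≤ K` produces a `G` whose derivative cancels exactly
these modes of `A`. Since `A` is the sum of its absolutely convergent Fourier series, what is left
is the average and the modes with `|ℓ| > K`. The Diophantine condition together with `|ℓ| ≤ K`
bounds `|i ν·ℓ|⁻¹` by `γ⁻¹ K^τ`, uniformly in `ℓ`, hence the norm estimate term by term.

The inversion formula for vector-valued functions reduces to the scalar one by duality.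
-/

section Modes

variable {ι : Type*} [Fintype ι]

/-- The mode `φ ↦ e^{i ℓ·φ}`, a character of the torus seen as a periodic function on `ℝ^ι`. -/
noncomputable def fourierMode (ℓ : ι → ℤ) (φ : ι → ℝ) : ℂ :=
  Complex.exp (Complex.I * ∑ j, (ℓ j : ℂ) * (φ j : ℂ))

/-- The small divisor `i ν·ℓ`, the eigenvalue of `ν·∂_φ` on the mode `e^{i ℓ·φ}`. -/
noncomputable def smallDivisor (ν : ι → ℝ) (ℓ : ι → ℤ) : ℂ :=
  Complex.I * ∑ j, (ν j : ℂ) * (ℓ j : ℂ)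

/-- The trigonometric polynomial `φ ↦ Σ_{ℓ ∈ S} c(ℓ) e^{i ℓ·φ}` with vector coefficients. -/
noncomputable def trigPoly {E : Type*} [AddCommGroup E] [Module ℂ E]
    (S : Finset (ι → ℤ)) (c : (ι → ℤ) → E) (φ : ι → ℝ) : E :=
  ∑ ℓ ∈ S, fourierMode ℓ φ • c ℓ

theorem fourierMode_zero_left (φ : ι → ℝ) : fourierMode 0 φ = 1 := by
  simp [fourierMode]

theorem fourierMode_neg_left (ℓ : ι → ℤ) (φ : ι → ℝ) :
    fourierMode (-ℓ) φ = Complex.exp (-Complex.I * ∑ j, (ℓ j : ℂ) * (φ j : ℂ)) := by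
  simp [fourierMode]

theorem norm_smallDivisor (ν : ι → ℝ) (ℓ : ι → ℤ) :
    ‖smallDivisor ν ℓ‖ = |∑ j, ν j * (ℓ j : ℝ)| := by
  have : ∑ j, (ν j : ℂ) * (ℓ j : ℂ) = ((∑ j, ν j * (ℓ j : ℝ) : ℝ) : ℂ) := by push_cast; rfl
  rw [smallDivisor, this, norm_mul, Complex.norm_I, one_mul, Complex.norm_real, norm_eq_abs]

theorem differentiable_fourierMode (ℓ : ι → ℤ) : Differentiable ℝ (fourierMode ℓ) := by
  unfold fourierMode
  fun_prop

theorem fourierMode_add_smul (ℓ : ι → ℤ) (φ ν : ι → ℝ) (t : ℝ) :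
    fourierMode ℓ (φ + t • ν) = fourierMode ℓ φ * Complex.exp (t * smallDivisor ν ℓ) := by
  rw [fourierMode, fourierMode, smallDivisor, ← Complex.exp_add, mul_left_comm, ← mul_add,
    Finset.mul_sum _ _ (t : ℂ), ← Finset.sum_add_distrib]
  congr! 3 with j
  simp only [Pi.add_apply, Pi.smul_apply, smul_eq_mul]
  push_cast
  ring

theorem fderiv_fourierMode_apply (ℓ : ι → ℤ) (φ ν : ι → ℝ) :
    fderiv ℝ (fourierMode ℓ) φ ν = fourierMode ℓ φ * smallDivisor ν ℓ := by
  have hline : HasDerivAt (fun t : ℝ => fourierMode ℓ (φ + t • ν))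
      (fourierMode ℓ φ * smallDivisor ν ℓ) 0 := by
    simp only [fourierMode_add_smul]
    simpa using ((Complex.ofRealCLM.hasDerivAt (x := 0)).mul_const
      (smallDivisor ν ℓ)).cexp.const_mul (fourierMode ℓ φ)
  rw [← (differentiable_fourierMode ℓ φ).lineDeriv_eq_fderiv]
  exact hline.deriv

variable {E : Type*} [NormedAddCommGroup E] [NormedSpace ℂ E]

theorem fderiv_trigPoly_apply (S : Finset (ι → ℤ)) (c : (ι → ℤ) → E) (φ ν : ι → ℝ) :
    fderiv ℝ (trigPoly S c) φ ν = trigPoly S (fun ℓ => smallDivisor ν ℓ • c ℓ) φ := by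
  have hderiv : HasFDerivAt (trigPoly S c)
      (∑ ℓ ∈ S, (fderiv ℝ (fourierMode ℓ) φ).smulRight (c ℓ)) φ :=
    HasFDerivAt.fun_sum fun ℓ _ => (differentiable_fourierMode ℓ φ).hasFDerivAt.smul_const (c ℓ)
  simp only [hderiv.fderiv, sum_apply, ContinuousLinearMap.smulRight_apply,
    fderiv_fourierMode_apply, mul_smul, trigPoly]

theorem sum_smul_apply_single {R M : Type*} [Semiring R] [AddCommMonoid M] [Module R M]
    [DecidableEq ι] (L : (ι → R) →ₗ[R] M) (v : ι → R) :
    ∑ j, v j • L (Pi.single j 1) = L v := by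
  conv_rhs => rw [pi_eq_sum_univ' v, map_sum]
  simp only [map_smul]

theorem sum_smul_fderiv_eq_neg_trigPoly [DecidableEq ι] {ν : ι → ℝ} {S : Finset (ι → ℤ)}
    (hS : ∀ ℓ ∈ S, smallDivisor ν ℓ ≠ 0) {c : (ι → ℤ) → E} {G : (ι → ℝ) → E}
    (hG : ∀ φ, G φ = -∑ ℓ ∈ S, (fourierMode ℓ φ * (smallDivisor ν ℓ)⁻¹) • c ℓ) (φ : ι → ℝ) :
    ∑ j, ν j • fderiv ℝ G φ (Pi.single j 1) = -trigPoly S c φ := by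
  have hG' : G = -trigPoly S fun ℓ => (smallDivisor ν ℓ)⁻¹ • c ℓ := by
    funext φ
    simp only [hG, mul_smul, Pi.neg_apply, trigPoly]
  have hcancel : trigPoly S (fun ℓ => smallDivisor ν ℓ • (smallDivisor ν ℓ)⁻¹ • c ℓ) φ =
      trigPoly S c φ :=
    Finset.sum_congr rfl fun ℓ hℓ => congrArg _ (smul_inv_smul₀ (hS ℓ hℓ) (c ℓ))
  calc ∑ j, ν j • fderiv ℝ G φ (Pi.single j 1)
      = fderiv ℝ G φ ν := sum_smul_apply_single (fderiv ℝ G φ).toLinearMap ν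
    _ = -trigPoly S c φ := by
      rw [hG', fderiv_neg, neg_apply, fderiv_trigPoly_apply, hcancel]

end Modes

section FourierInversion

open UnitAddTorus

section UnitTorus

variable {ι : Type*} [Fintype ι] {E F : Type*} [NormedAddCommGroup E] [NormedSpace ℂ E]
  [CompleteSpace E] [NormedAddCommGroup F] [NormedSpace ℂ F] [CompleteSpace F]

theorem mFourierCoeff_clm_comp (L : E →L[ℂ] F) (g : C(UnitAddTorus ι, E)) (ℓ : ι → ℤ) :
    mFourierCoeff (fun x => L (g x)) ℓ = L (mFourierCoeff g ℓ) := by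
  rw [mFourierCoeff, mFourierCoeff, ← L.integral_comp_comm]
  · simp only [map_smul]
  · -- The measure behind `mFourierCoeff` is a local instance of Mathlib, hence made explicit here.
    change Integrable _ (Measure.pi fun _ => AddCircle.haarAddCircle)
    exact Continuous.integrable_of_hasCompactSupport (by fun_prop) (.of_compactSpace _)

theorem hasSum_mFourier_smul_mFourierCoeff (g : C(UnitAddTorus ι, E))
    (hg : Summable fun ℓ => ‖mFourierCoeff g ℓ‖) (x : UnitAddTorus ι) :
    HasSum (fun ℓ => mFourier ℓ x • mFourierCoeff g ℓ) (g x) := by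
  have hsummable : Summable fun ℓ => mFourier ℓ x • mFourierCoeff g ℓ :=
    .of_norm_bounded hg fun ℓ => by
      simpa only [norm_smul, mFourier_norm, one_mul] using
        mul_le_mul_of_nonneg_right ((mFourier ℓ).norm_coe_le_norm x) (norm_nonneg _)
  suffices ∑' ℓ, mFourier ℓ x • mFourierCoeff g ℓ = g x from this ▸ hsummable.hasSum
  refine (SeparatingDual.eq_iff_forall_dual_eq (R := ℂ)).2 fun L => ?_
  have hcoeff : mFourierCoeff ((L : C(E, ℂ)).comp g) = fun ℓ => L (mFourierCoeff g ℓ) :=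
    funext (mFourierCoeff_clm_comp L g)
  have hscalar := hasSum_mFourier_series_apply_of_summable
    (hcoeff ▸ (Summable.of_norm hg).mapL L : Summable (mFourierCoeff ((L : C(E, ℂ)).comp g))) x
  refine (hsummable.hasSum.mapL L).unique (hscalar.congr_fun fun ℓ => ?_)
  rw [hcoeff, map_smul, smul_eq_mul, smul_eq_mul, mul_comm]

end UnitTorus

/-- The projection of `ℝ^ι` onto the torus. Circles in `UnitAddTorus` have length `1`, whence the
rescaling by `2π`. -/
noncomputable def toUnitAddTorus (ι : Type*) : C(ι → ℝ, UnitAddTorus ι) where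
  toFun x i := ((2 * π)⁻¹ * x i : ℝ)
  continuous_toFun := continuous_pi fun i =>
    (AddCircle.continuous_mk' 1).comp (continuous_const.mul (continuous_apply i))

theorem isOpenQuotientMap_toUnitAddTorus (ι : Type*) : IsOpenQuotientMap (toUnitAddTorus ι) :=
  .piMap (f := fun _ x => (((2 * π)⁻¹ * x : ℝ) : UnitAddCircle)) fun _ =>
    QuotientAddGroup.isOpenQuotientMap_mk.comp
      (Homeomorph.mulLeft₀ (2 * π)⁻¹ (by positivity)).isOpenQuotientMap

theorem mFourier_toUnitAddTorus {ι : Type*} [Fintype ι] (ℓ : ι → ℤ) (x : ι → ℝ) :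
    mFourier ℓ (toUnitAddTorus ι x) = fourierMode ℓ x := by
  simp only [mFourier, toUnitAddTorus, ContinuousMap.coe_mk, fourier_coe_apply, fourierMode]
  rw [← Complex.exp_sum, Finset.mul_sum]
  congr! 2 with j
  push_cast
  field_simp

theorem setIntegral_pi_Ioc_comp_smul {ι : Type*} [Fintype ι] {E : Type*} [NormedAddCommGroup E]
    [NormedSpace ℝ E] (f : (ι → ℝ) → E) {R : ℝ} (hR : 0 < R) :
    ∫ x in Set.univ.pi fun _ => Set.Ioc 0 1, f (R • x) =
      (R ^ Fintype.card ι)⁻¹ • ∫ x in Set.univ.pi fun _ => Set.Icc 0 R, f x := by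
  rw [Measure.setIntegral_comp_smul_of_pos volume f _ hR, Module.finrank_fintype_fun_eq_card,
    smul_univ_pi, volume_pi]
  simp only [Pi.smul_def, LinearOrderedField.smul_Ioc hR, mul_zero, mul_one]
  rw [setIntegral_congr_set Measure.pi_Ioc_ae_eq_pi_Icc]

variable {n : ℕ} {E : Type*} [NormedAddCommGroup E] [NormedSpace ℂ E] [CompleteSpace E]

theorem fCoeff_comp_toUnitAddTorus (g : UnitAddTorus (Fin n) → E) (ℓ : Fin n → ℤ) :
    fCoeff (g ∘ toUnitAddTorus (Fin n)) ℓ = mFourierCoeff g ℓ := by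
  have hproj (x : Fin n → ℝ) :
      (fun i => (x i : UnitAddCircle)) = toUnitAddTorus (Fin n) ((2 * π) • x) := by
    funext i
    simp only [toUnitAddTorus, ContinuousMap.coe_mk, Pi.smul_apply, smul_eq_mul,
      inv_mul_cancel_left₀ two_pi_pos.ne']
  have hcube : {x : Fin n → ℝ | ∀ i, x i ∈ Set.Ioc ((0 : Fin n → ℝ) i) ((0 : Fin n → ℝ) i + 1)} =
      Set.univ.pi fun _ => Set.Ioc 0 1 := by
    ext x
    simp
  rw [mFourierCoeff_eq_integral g ℓ 0, hcube]
  simp only [hproj, mFourier_toUnitAddTorus]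
  rw [setIntegral_pi_Ioc_comp_smul
    (fun x => fourierMode (-ℓ) x • g (toUnitAddTorus (Fin n) x)) two_pi_pos]
  simp only [fCoeff, fourierMode_neg_left, Function.comp_apply, Fintype.card_fin]

theorem Periodic2Pi.factorsThrough {X : Type*} {f : (Fin n → ℝ) → X} (hf : Periodic2Pi f) :
    f.FactorsThrough (toUnitAddTorus (Fin n)) := by
  intro x y hxy
  have hshift (i : Fin n) : ∃ m : ℤ, x i = y i + 2 * π * m := by
    have hi : (((2 * π)⁻¹ * x i - (2 * π)⁻¹ * y i : ℝ) : UnitAddCircle) = 0 := by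
      rw [AddCircle.coe_sub, sub_eq_zero]
      exact congrFun hxy i
    obtain ⟨m, hm⟩ := (AddCircle.coe_eq_zero_iff 1).1 hi
    refine ⟨m, ?_⟩
    rw [zsmul_one] at hm
    rw [hm]
    field_simp
    ring
  choose m hm using hshift
  rw [← hf y m, ← funext hm]

theorem Periodic2Pi.exists_eq_comp_toUnitAddTorus {X : Type*} [TopologicalSpace X]
    {f : (Fin n → ℝ) → X} (hper : Periodic2Pi f) (hcont : Continuous f) :
    ∃ g : C(UnitAddTorus (Fin n), X), f = g ∘ toUnitAddTorus (Fin n) :=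
  have hquot := (isOpenQuotientMap_toUnitAddTorus (Fin n)).isQuotientMap
  ⟨hquot.lift ⟨f, hcont⟩ hper.factorsThrough,
    congrArg DFunLike.coe (hquot.lift_comp ⟨f, hcont⟩ hper.factorsThrough).symm⟩

theorem hasSum_fourierMode_smul_fCoeff {f : (Fin n → ℝ) → E} (hper : Periodic2Pi f)
    (hcont : Continuous f) (hsum : Summable fun ℓ => ‖fCoeff f ℓ‖) (φ : Fin n → ℝ) :
    HasSum (fun ℓ => fourierMode ℓ φ • fCoeff f ℓ) (f φ) := by
  obtain ⟨g, rfl⟩ := hper.exists_eq_comp_toUnitAddTorus hcont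
  simp only [fCoeff_comp_toUnitAddTorus, ← mFourier_toUnitAddTorus] at hsum ⊢
  exact hasSum_mFourier_smul_mFourierCoeff g hsum _

end FourierInversion

section SmallDivisors

variable {n : ℕ}

theorem l1Z_zero : l1Z (0 : Fin n → ℤ) = 0 := by
  simp [l1Z]

theorem l1Z_nonneg (ℓ : Fin n → ℤ) : 0 ≤ l1Z ℓ :=
  Finset.sum_nonneg fun _ _ => abs_nonneg _

theorem abs_le_l1Z (ℓ : Fin n → ℤ) (i : Fin n) : |(ℓ i : ℝ)| ≤ l1Z ℓ :=
  Finset.single_le_sum (f := fun j => |(ℓ j : ℝ)|) (fun _ _ => abs_nonneg _) (Finset.mem_univ i)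

theorem l1Z_pos {ℓ : Fin n → ℤ} (hℓ : ℓ ≠ 0) : 0 < l1Z ℓ := by
  obtain ⟨i, hi⟩ := Function.ne_iff.1 hℓ
  exact (abs_pos.2 (Int.cast_ne_zero.2 hi)).trans_le (abs_le_l1Z ℓ i)

theorem mem_Icc_ceil_of_l1Z_le {K : ℝ} {ℓ : Fin n → ℤ} (hℓ : l1Z ℓ ≤ K) :
    ℓ ∈ Finset.Icc (fun _ : Fin n => -⌈K⌉) (fun _ => ⌈K⌉) := by
  have hcoord (i : Fin n) : |ℓ i| ≤ ⌈K⌉ := by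
    exact_mod_cast ((abs_le_l1Z ℓ i).trans hℓ).trans (Int.le_ceil K)
  exact Finset.mem_Icc.2 ⟨fun i => (abs_le.1 (hcoord i)).1, fun i => (abs_le.1 (hcoord i)).2⟩

theorem div_rpow_le_norm_smallDivisor {γ τ K : ℝ} (hγ : 0 ≤ γ) (hτ : 0 ≤ τ) {ν : Fin n → ℝ}
    {ℓ : Fin n → ℤ} (hℓ : ℓ ≠ 0) (hℓK : l1Z ℓ ≤ K)
    (hdio : γ / l1Z ℓ ^ τ ≤ |∑ j, ν j * (ℓ j : ℝ)|) : γ / K ^ τ ≤ ‖smallDivisor ν ℓ‖ :=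
  have hpos := l1Z_pos hℓ
  calc γ / K ^ τ ≤ γ / l1Z ℓ ^ τ := by gcongr
    _ ≤ ‖smallDivisor ν ℓ‖ := (norm_smallDivisor ν ℓ).symm ▸ hdio

theorem summable_norm_of_summable_norm_mul_exp {E : Type*} [SeminormedAddCommGroup E]
    {c : (Fin n → ℤ) → E} {σ : ℝ} (hσ : 0 ≤ σ)
    (hc : Summable fun ℓ => ‖c ℓ‖ * exp (σ * l1Z ℓ)) : Summable fun ℓ => ‖c ℓ‖ :=
  .of_nonneg_of_le (fun _ => norm_nonneg _)
    (fun ℓ => le_mul_of_one_le_right (norm_nonneg _)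
      (one_le_exp (mul_nonneg hσ (l1Z_nonneg ℓ)))) hc

end SmallDivisors

theorem tsum_eq_tsum_ultraviolet_add {n : ℕ} {E : Type*} [AddCommGroup E] [TopologicalSpace E]
    [IsTopologicalAddGroup E] [T2Space E] {f : (Fin n → ℤ) → E} {K : ℝ} {S : Finset (Fin n → ℤ)}
    (hf : Summable f) (hK : 0 ≤ K) (hS : ∀ ℓ, ℓ ∈ S ↔ ℓ ≠ 0 ∧ l1Z ℓ ≤ K) :
    ∑' ℓ, f ℓ = (∑' ℓ, if K < l1Z ℓ then f ℓ else 0) + f 0 + ∑ ℓ ∈ S, f ℓ := by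
  have h0 : 0 ∉ S := fun h => ((hS 0).1 h).1 rfl
  have hcompl : ((insert 0 S : Finset (Fin n → ℤ)) : Set (Fin n → ℤ))ᶜ = {ℓ | K < l1Z ℓ} := by
    ext ℓ
    rcases eq_or_ne ℓ 0 with rfl | hℓ
    · simp [l1Z_zero, hK]
    · simp [hS, hℓ]
  rw [← hf.sum_add_tsum_compl (s := insert 0 S), hcompl, Finset.sum_insert h0, tsum_subtype,
    add_comm, add_assoc]
  simp only [Set.indicator_apply, Set.mem_ofPred_eq]

theorem sum_norm_smul_mul_le {ι 𝕜 E : Type*} [NormedField 𝕜] [SeminormedAddCommGroup E]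
    [NormedSpace 𝕜 E] {S : Finset ι} {d : ι → 𝕜} {c : ι → E} {w : ι → ℝ} {C : ℝ} (hC : 0 ≤ C)
    (hw : ∀ ℓ, 0 ≤ w ℓ) (hd : ∀ ℓ ∈ S, ‖d ℓ‖ ≤ C) (hc : Summable fun ℓ => ‖c ℓ‖ * w ℓ) :
    ∑ ℓ ∈ S, ‖d ℓ • c ℓ‖ * w ℓ ≤ C * ∑' ℓ, ‖c ℓ‖ * w ℓ :=
  have hnonneg (ℓ : ι) : 0 ≤ ‖c ℓ‖ * w ℓ := mul_nonneg (norm_nonneg _) (hw ℓ)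
  calc ∑ ℓ ∈ S, ‖d ℓ • c ℓ‖ * w ℓ
      ≤ ∑ ℓ ∈ S, C * (‖c ℓ‖ * w ℓ) := Finset.sum_le_sum fun ℓ hℓ => by
        rw [norm_smul, mul_assoc]
        exact mul_le_mul_of_nonneg_right (hd ℓ hℓ) (hnonneg ℓ)
    _ = C * ∑ ℓ ∈ S, ‖c ℓ‖ * w ℓ := (Finset.mul_sum ..).symm
    _ ≤ C * ∑' ℓ, ‖c ℓ‖ * w ℓ :=
      mul_le_mul_of_nonneg_left (hc.sum_le_tsum S fun ℓ _ => hnonneg ℓ) hC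

theorem stmt5_general {n : ℕ} {E : Type*} [NormedAddCommGroup E] [NormedSpace ℂ E]
    [CompleteSpace E] {γ τ σ K : ℝ} (hγ : 0 < γ) (hτ : 0 ≤ τ) (hσ : 0 ≤ σ) (hK : 0 < K)
    {ν : Fin n → ℝ}
    (hdio : ∀ ℓ : Fin n → ℤ, ℓ ≠ 0 → l1Z ℓ ≤ K → γ / l1Z ℓ ^ τ ≤ |∑ j, ν j * (ℓ j : ℝ)|)
    {A : (Fin n → ℝ) → E} (hper : Periodic2Pi A) (hcont : Continuous A)
    (hsum : Summable fun ℓ => ‖fCoeff A ℓ‖ * exp (σ * l1Z ℓ))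
    {S : Finset (Fin n → ℤ)} (hS : ∀ ℓ, ℓ ∈ S ↔ ℓ ≠ 0 ∧ l1Z ℓ ≤ K) {G : (Fin n → ℝ) → E}
    (hG : ∀ φ, G φ = -∑ ℓ ∈ S, (fourierMode ℓ φ * (smallDivisor ν ℓ)⁻¹) • fCoeff A ℓ) :
    (∀ φ, ∑ j, ν j • fderiv ℝ G φ (Pi.single j 1) + A φ =
      (∑' ℓ, if K < l1Z ℓ then fourierMode ℓ φ • fCoeff A ℓ else 0) + fCoeff A 0) ∧
    ∑ ℓ ∈ S, ‖(smallDivisor ν ℓ)⁻¹ • fCoeff A ℓ‖ * exp (σ * l1Z ℓ) ≤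
      γ⁻¹ * K ^ τ * ∑' ℓ, ‖fCoeff A ℓ‖ * exp (σ * l1Z ℓ) := by
  have hlow : ∀ ℓ ∈ S, γ / K ^ τ ≤ ‖smallDivisor ν ℓ‖ := fun ℓ hℓ =>
    have ⟨hℓ0, hℓK⟩ := (hS ℓ).1 hℓ
    div_rpow_le_norm_smallDivisor hγ.le hτ hℓ0 hℓK (hdio ℓ hℓ0 hℓK)
  have hpos : 0 < γ / K ^ τ := by positivity
  refine ⟨fun φ => ?_, sum_norm_smul_mul_le (by positivity) (fun _ => by positivity)
    (fun ℓ hℓ => ?_) hsum⟩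
  · have hseries := hasSum_fourierMode_smul_fCoeff hper hcont
      (summable_norm_of_summable_norm_mul_exp hσ hsum) φ
    rw [sum_smul_fderiv_eq_neg_trigPoly
        (fun ℓ hℓ => norm_pos_iff.1 (hpos.trans_le (hlow ℓ hℓ))) hG φ,
      ← hseries.tsum_eq, tsum_eq_tsum_ultraviolet_add hseries.summable hK.le hS,
      fourierMode_zero_left, one_smul, trigPoly, neg_add_eq_sub, add_sub_cancel_right]
  · calc ‖(smallDivisor ν ℓ)⁻¹‖ ≤ (γ / K ^ τ)⁻¹ := by
          rw [norm_inv]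
          exact inv_anti₀ hpos (hlow ℓ hℓ)
      _ = γ⁻¹ * K ^ τ := by rw [inv_div, div_eq_inv_mul]

/-- Solution of the homological equation: for a Diophantine `ν ∈ DC^n(γ,τ)`, the
trigonometric polynomial `G(φ) = -Σ_{0<|ℓ|≤K} (Â(ℓ)/(iν·ℓ)) e^{iℓ·φ}` solves
`(ν·∂_φ)G + A = A^{uv} + ⟨A⟩` and `‖G‖_σ ≤ γ⁻¹ K^τ ‖A‖_σ`. -/
theorem stmt5 {n : ℕ} (hn : 1 ≤ n) (γ τ : ℝ) (hγ : 0 < γ) (hτ : 0 < τ)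
    (ν : Fin n → ℝ)
    (hdio : ∀ ℓ : Fin n → ℤ, ℓ ≠ 0 → γ / (l1Z ℓ) ^ τ ≤ |∑ j, ν j * (ℓ j : ℝ)|)
    (σ K : ℝ) (hσ : 0 ≤ σ) (hK : 0 < K)
    {H : Type*} [NormedAddCommGroup H] [InnerProductSpace ℂ H] [CompleteSpace H]
    (A : (Fin n → ℝ) → (H →L[ℂ] H)) (hper : Periodic2Pi A) (hcont : Continuous A)
    (hsum : Summable (fun ℓ : Fin n → ℤ => ‖fCoeff A ℓ‖ * Real.exp (σ * l1Z ℓ)))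
    (S : Finset (Fin n → ℤ))
    (hS : S = (Finset.Icc (fun _ => -⌈K⌉) (fun _ => ⌈K⌉)).filter
        (fun ℓ : Fin n → ℤ => ℓ ≠ 0 ∧ l1Z ℓ ≤ K))
    (G : (Fin n → ℝ) → (H →L[ℂ] H))
    (hG : ∀ φ : Fin n → ℝ, G φ = - ∑ ℓ ∈ S,
        (Complex.exp (Complex.I * ∑ j, (ℓ j : ℂ) * (φ j : ℂ)) *
          (Complex.I * ∑ j, (ν j : ℂ) * (ℓ j : ℂ))⁻¹) • fCoeff A ℓ) :
    (∀ φ : Fin n → ℝ,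
      (∑ j, ν j • fderiv ℝ G φ (Pi.single j 1)) + A φ
        = (∑' ℓ : Fin n → ℤ, if K < l1Z ℓ then
            Complex.exp (Complex.I * ∑ j, (ℓ j : ℂ) * (φ j : ℂ)) • fCoeff A ℓ else 0)
          + fCoeff A 0) ∧
    (∑ ℓ ∈ S, ‖(Complex.I * ∑ j, (ν j : ℂ) * (ℓ j : ℂ))⁻¹ • fCoeff A ℓ‖ * Real.exp (σ * l1Z ℓ))
      ≤ γ⁻¹ * K ^ τ * (∑' ℓ : Fin n → ℤ, ‖fCoeff A ℓ‖ * Real.exp (σ * l1Z ℓ)) := by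
  exact stmt5_general hγ hτ.le hσ hK (fun ℓ hℓ _ => hdio ℓ hℓ) hper hcont hsum
    (fun ℓ => by simpa [hS] using fun _ => mem_Icc_ceil_of_l1Z_le) hG
end
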